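/- For every ν ∈ [0,1] ∖ {√3/2} one has c₂(ν) ≥ 0. -/

import Mathlib

/-- Υ_ν := √(1 − ν²). -/
noncomputable def Ups (ν : ℝ) : ℝ := Real.sqrt (1 - ν ^ 2)

/-- w_ν := Υ_ν · cot(π Υ_ν / 2) for ν ∈ [0,1), with w_1 := 2/π (continuous extension). -/
noncomputable def w (ν : ℝ) : ℝ :=
  if ν = 1 then 2 / Real.pi else Ups ν * Real.cot (Real.pi * Ups ν / 2)

/-- η_ν := (√(9+4ν²) − 4ν)/(3(1 − 2 w_ν)) for ν ≠ √3/2, and η_{√3/2} := 1/(√3 (π−2)). -/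
noncomputable def eta (ν : ℝ) : ℝ :=
  if ν = Real.sqrt 3 / 2 then 1 / (Real.sqrt 3 * (Real.pi - 2))
  else (Real.sqrt (9 + 4 * ν ^ 2) - 4 * ν) / (3 * (1 - 2 * w ν))

/-- c₂(ν) as in the paper. -/
noncomputable def c2 (ν : ℝ) : ℝ :=
  (16 * ν * Real.sqrt (9 + 4 * ν ^ 2) / 9) *
    (72 * (5 + 2 * ν ^ 2) - 1764 * ν / Real.sqrt (9 + 4 * ν ^ 2)
      + (Real.sqrt (9 + 4 * ν ^ 2) - 4 * ν) ^ 2 *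
        (-4 + 9 * Real.pi ^ 2 * (Real.pi - 4) ^ 2 / (4 * (Real.pi - 2) ^ 2)
          - (3 * Real.pi * (4 - Real.pi) / (2 * (Real.pi - 2))
              + 3 * (Real.pi - 2) / (1 - 2 * w ν)) ^ 2))

/-!
Up to the factor `16 ν √(9 + 4 ν²)`, `c₂(ν)` is a quadratic in `η_ν` which is concave and is
nonnegative at `0`. As `η_ν ≥ 0`, it suffices to check the sign at an upper bound of `η_ν`, and such
a bound comes from comparing `w_ν` with simple functions of `x = 1 - ν²`. The estimate must be exact
at `ν = 0` and exact to second order at `ν = √3 / 2`, where the quadratic vanishes.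

* For `ν ≤ 3 / 8` the tangent line `π / 4 * (1 - x)` at `x = 1` is good enough.
* For `ν ≥ 3 / 8` the second order Taylor polynomial at `x = 1 / 4` is used. It lies above
  `u cot (π u / 2)`, `x = u²`, to the right of `1 / 4` and below it to the left: `u cot (π u / 2)`
  solves a Riccati equation, in which the defect of the polynomial is `(x - 1 / 4)²` times a
  monotone function. With `r = (√(9 + 4 ν²) + 2 ν) / 3` everything becomes rational in `s = 3 - r²`,
  and `π` enters only through one parameter `β`; a factor `s²` splits off, and the cofactor is
  positive.
-/

open scoped Real

section PhaseGap

/-- The angle `π u / 2` minus the argument of `T (u ^ 2) + i u`. As `cot (arg (t + i u)) = t / u`,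
its sign compares `T (u ^ 2)` with `u * cot (π u / 2)`; unlike a version with `arctan`, it stays
smooth where `T (u ^ 2) = 0` and where `u = 0 < T 0`. -/
noncomputable def phaseGap (T : ℝ → ℝ) (u : ℝ) : ℝ :=
  π * u / 2 - Complex.arg (⟨T (u ^ 2), u⟩ : ℂ)

variable {T : ℝ → ℝ} {u : ℝ}

theorem mul_cos_sub_mul_sin_eq_norm_mul_sin (t u θ : ℝ) :
    u * Real.cos θ - t * Real.sin θ =
      ‖(⟨t, u⟩ : ℂ)‖ * Real.sin (Complex.arg ⟨t, u⟩ - θ) := by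
  have hre : ‖(⟨t, u⟩ : ℂ)‖ * Real.cos (Complex.arg ⟨t, u⟩) = t := Complex.norm_mul_cos_arg _
  have him : ‖(⟨t, u⟩ : ℂ)‖ * Real.sin (Complex.arg ⟨t, u⟩) = u := Complex.norm_mul_sin_arg _
  rw [Real.sin_sub]
  linear_combination Real.sin θ * hre - Real.cos θ * him

theorem sub_mul_cot_eq_norm_mul_sin_phaseGap_div (h0 : 0 < u) (h2 : u < 2) :
    T (u ^ 2) - u * Real.cot (π * u / 2) =
      ‖(⟨T (u ^ 2), u⟩ : ℂ)‖ * Real.sin (phaseGap T u) / Real.sin (π * u / 2) := by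
  have hsin : 0 < Real.sin (π * u / 2) :=
    Real.sin_pos_of_pos_of_lt_pi (by positivity) (by nlinarith [Real.pi_pos])
  rw [eq_div_iff hsin.ne', Real.cot_eq_cos_div_sin, phaseGap, ← neg_sub (Complex.arg _),
    Real.sin_neg, mul_neg, ← mul_cos_sub_mul_sin_eq_norm_mul_sin, sub_mul, mul_assoc,
    div_mul_cancel₀ _ hsin.ne']
  ring

theorem mul_cot_le_of_phaseGap_nonneg (h0 : 0 < u) (h2 : u < 2) (h : 0 ≤ phaseGap T u) :
    u * Real.cot (π * u / 2) ≤ T (u ^ 2) := by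
  have harg : 0 ≤ Complex.arg ⟨T (u ^ 2), u⟩ := Complex.arg_nonneg_iff.2 h0.le
  have hle : phaseGap T u ≤ π := by unfold phaseGap; nlinarith [Real.pi_pos]
  have hsin : 0 ≤ Real.sin (π * u / 2) :=
    Real.sin_nonneg_of_nonneg_of_le_pi (by positivity) (by nlinarith [Real.pi_pos])
  rw [← sub_nonneg, sub_mul_cot_eq_norm_mul_sin_phaseGap_div h0 h2]
  exact div_nonneg (mul_nonneg (norm_nonneg _) (Real.sin_nonneg_of_nonneg_of_le_pi h hle)) hsin

theorem le_mul_cot_of_phaseGap_nonpos (h0 : 0 < u) (h2 : u < 2) (h : phaseGap T u ≤ 0) :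
    T (u ^ 2) ≤ u * Real.cot (π * u / 2) := by
  have hge : -π ≤ phaseGap T u := by
    have harg := Complex.arg_le_pi ⟨T (u ^ 2), u⟩
    have : 0 ≤ π * u / 2 := by positivity
    unfold phaseGap
    linarith
  have hsin : 0 ≤ Real.sin (π * u / 2) :=
    Real.sin_nonneg_of_nonneg_of_le_pi (by positivity) (by nlinarith [Real.pi_pos])
  rw [← sub_nonpos, sub_mul_cot_eq_norm_mul_sin_phaseGap_div h0 h2]
  exact div_nonpos_of_nonpos_of_nonneg (mul_nonpos_of_nonneg_of_nonpos (norm_nonneg _)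
    (Real.sin_nonpos_of_nonpos_of_neg_pi_le h hge)) hsin

-- As a function of `x = u ^ 2`, `u * cot (π u / 2)` solves the Riccati equation
-- `2 x y' = y - π / 2 * (y ^ 2 + x)`; the numerator below is the defect of `T` in that equation.
theorem hasDerivAt_phaseGap {T' : ℝ} (hT : HasDerivAt T T' (u ^ 2)) (h : 0 < T (u ^ 2) ∨ u ≠ 0) :
    HasDerivAt (phaseGap T)
      ((π / 2 * (T (u ^ 2) ^ 2 + u ^ 2) - T (u ^ 2) + 2 * u ^ 2 * T') / (T (u ^ 2) ^ 2 + u ^ 2))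
      u := by
  have hnorm : T (u ^ 2) ^ 2 + u ^ 2 ≠ 0 := by
    rcases h with h | h <;> positivity
  have hsq : HasDerivAt (fun v : ℝ ↦ T (v ^ 2)) (T' * (2 * u)) u := by
    have hpow : HasDerivAt (fun v : ℝ ↦ v ^ 2) (2 * u) u := by simpa using hasDerivAt_pow 2 u
    exact HasDerivAt.comp (h₂ := T) u hT hpow
  have hcurve : HasDerivAt (fun v : ℝ ↦ (⟨T (v ^ 2), v⟩ : ℂ)) ⟨T' * (2 * u), 1⟩ u := by
    simpa only [Complex.mk_eq_add_mul_I, Complex.ofReal_one, id] using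
      hsq.ofReal_comp.fun_add ((hasDerivAt_id u).ofReal_comp.mul_const Complex.I)
  have harg : HasDerivAt (fun v : ℝ ↦ Complex.arg ⟨T (v ^ 2), v⟩)
      (Complex.im (⟨T' * (2 * u), 1⟩ / ⟨T (u ^ 2), u⟩)) u := by
    simpa only [Function.comp_def, Complex.imCLM_apply, Complex.log_im] using
      Complex.imCLM.hasFDerivAt.comp_hasDerivAt u
        (hcurve.clog_real (Complex.mem_slitPlane_iff.2 h))
  have hlin : HasDerivAt (fun v : ℝ ↦ π * v / 2) (π / 2) u := by
    simpa using ((hasDerivAt_id u).const_mul π).div_const 2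
  have hgap : HasDerivAt (phaseGap T) _ u := hlin.sub harg
  refine hgap.congr_deriv ?_
  simp only [Complex.div_im, Complex.normSq_mk]
  rw [← pow_two, ← pow_two]
  field_simp
  ring

end PhaseGap

section Calculus

variable {f g q : ℝ → ℝ} {a b : ℝ}

-- `f` decreases as long as `q` is negative and increases afterwards.
theorem nonpos_of_hasDerivAt_mul_monotoneOn
    (hf : ∀ v ∈ Set.Icc a b, HasDerivAt f (g v * q v) v) (hg : ∀ v ∈ Set.Icc a b, 0 ≤ g v)
    (hq : MonotoneOn q (Set.Icc a b)) (ha : f a ≤ 0) (hb : f b ≤ 0) :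
    ∀ u ∈ Set.Icc a b, f u ≤ 0 := by
  intro u hu
  rcases le_total 0 (q u) with h | h
  · have hsub : Set.Icc u b ⊆ Set.Icc a b := Set.Icc_subset_Icc_left hu.1
    have hmono : MonotoneOn f (Set.Icc u b) :=
      monotoneOn_of_hasDerivWithinAt_nonneg (convex_Icc u b)
        (fun v hv ↦ (hf v (hsub hv)).continuousAt.continuousWithinAt)
        (fun v hv ↦ (hf v (hsub (interior_subset hv))).hasDerivWithinAt)
        (fun v hv ↦ mul_nonneg (hg v (hsub (interior_subset hv)))
          (h.trans (hq hu (hsub (interior_subset hv)) (interior_subset hv).1)))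
    exact (hmono ⟨le_rfl, hu.2⟩ ⟨hu.2, le_rfl⟩ hu.2).trans hb
  · have hsub : Set.Icc a u ⊆ Set.Icc a b := Set.Icc_subset_Icc_right hu.2
    have hanti : AntitoneOn f (Set.Icc a u) :=
      antitoneOn_of_hasDerivWithinAt_nonpos (convex_Icc a u)
        (fun v hv ↦ (hf v (hsub hv)).continuousAt.continuousWithinAt)
        (fun v hv ↦ (hf v (hsub (interior_subset hv))).hasDerivWithinAt)
        (fun v hv ↦ mul_nonpos_of_nonneg_of_nonpos (hg v (hsub (interior_subset hv)))
          ((hq (hsub (interior_subset hv)) hu (interior_subset hv).2).trans h))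
    exact (hanti ⟨le_rfl, hu.1⟩ ⟨hu.1, le_rfl⟩ hu.1).trans ha

end Calculus

section CotBounds

variable {u x : ℝ}

theorem mul_cot_le_pi_div_four_mul_one_sub_sq (h1 : 1 / 2 ≤ u) (h2 : u ≤ 1) :
    u * Real.cot (π * u / 2) ≤ π / 4 * (1 - u ^ 2) := by
  set T : ℝ → ℝ := fun x ↦ π / 4 * (1 - x)
  have hT (x : ℝ) : HasDerivAt T (-(π / 4)) x := by
    simpa using ((hasDerivAt_id x).const_sub 1).const_mul (π / 4)
  have hpos {v : ℝ} (hv : v ∈ Set.Icc (1 / 2) 1) : 0 < v := by linarith [hv.1]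
  have hderiv (v : ℝ) (hv : v ∈ Set.Icc (1 / 2) 1) :=
    hasDerivAt_phaseGap (hT (v ^ 2)) (.inr (hpos hv).ne')
  have hanti : AntitoneOn (phaseGap T) (Set.Icc (1 / 2) 1) := by
    refine antitoneOn_of_hasDerivWithinAt_nonpos (convex_Icc _ _)
      (fun v hv ↦ (hderiv v hv).continuousAt.continuousWithinAt)
      (fun v hv ↦ (hderiv v (interior_subset hv)).hasDerivWithinAt) (fun v hv ↦ ?_)
    obtain ⟨hv1, hv2⟩ := interior_subset hv
    have hdefect : π / 2 * (T (v ^ 2) ^ 2 + v ^ 2) - T (v ^ 2) + 2 * v ^ 2 * -(π / 4) =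
        -(π / 4 * (1 - v ^ 2) * (1 - π ^ 2 / 8 * (1 - v ^ 2))) := by
      simp only [T]
      ring
    have hsq : 0 ≤ 1 - v ^ 2 := by nlinarith
    have hfactor : 0 ≤ 1 - π ^ 2 / 8 * (1 - v ^ 2) := by
      have hpi : π ^ 2 ≤ 10 := by nlinarith [Real.pi_pos, Real.pi_lt_d2]
      nlinarith
    rw [hdefect]
    exact div_nonpos_of_nonpos_of_nonneg (neg_nonpos.2 (by positivity)) (by positivity)
  have hone : phaseGap T 1 = 0 := by
    have hI : (⟨T (1 ^ 2), 1⟩ : ℂ) = Complex.I := by simp [T, Complex.ext_iff]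
    rw [phaseGap, hI, Complex.arg_I]
    ring
  refine mul_cot_le_of_phaseGap_nonneg (T := T) (by linarith) (by linarith) ?_
  rw [← hone]
  exact hanti ⟨h1, h2⟩ ⟨by norm_num, le_rfl⟩ h2

/-- The constant `β ≈ 0.0906` for which the Taylor polynomial `cotTaylor` of `u * cot (π u / 2)`
satisfies `1 - 2 * cotTaylor x = (π - 2) * (x - 1 / 4) * (1 + 2 * β * (x - 1 / 4))`. -/
noncomputable def cotTaylorRatio : ℝ := (4 + 2 * π - π ^ 2) / (4 * (π - 2))

theorem four_mul_pi_sub_two_mul_cotTaylorRatio :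
    4 * (π - 2) * cotTaylorRatio = 4 + 2 * π - π ^ 2 := by
  have : π - 2 ≠ 0 := by linarith [Real.pi_gt_three]
  rw [cotTaylorRatio]
  field_simp

theorem cotTaylorRatio_pos : 0 < cotTaylorRatio :=
  div_pos (by nlinarith [Real.pi_pos, Real.pi_lt_d2]) (by linarith [Real.pi_gt_three])

theorem cotTaylorRatio_le : cotTaylorRatio ≤ 1 / 10 := by
  rw [cotTaylorRatio, div_le_iff₀ (by linarith [Real.pi_gt_three])]
  nlinarith [Real.pi_gt_d2]

/-- The second order Taylor polynomial at `x = 1 / 4` of `u * cot (π u / 2)`, viewed as a function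
of `x = u ^ 2`. -/
noncomputable def cotTaylor (x : ℝ) : ℝ :=
  1 / 2 - (π - 2) / 2 * (x - 1 / 4) * (1 + 2 * cotTaylorRatio * (x - 1 / 4))

theorem one_sub_two_mul_cotTaylor (x : ℝ) :
    1 - 2 * cotTaylor x = (π - 2) * (x - 1 / 4) * (1 + 2 * cotTaylorRatio * (x - 1 / 4)) := by
  rw [cotTaylor]
  ring

theorem cotTaylor_zero_pos : 0 < cotTaylor 0 := by
  have := four_mul_pi_sub_two_mul_cotTaylorRatio
  unfold cotTaylor
  nlinarith [Real.pi_gt_d2, Real.pi_lt_d2]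

theorem cotTaylor_zero_le : cotTaylor 0 ≤ 2 / π := by
  have := four_mul_pi_sub_two_mul_cotTaylorRatio
  have hval : cotTaylor 0 = (4 + 6 * π + π ^ 2) / 64 + 1 / 8 := by
    unfold cotTaylor
    linarith
  rw [hval, le_div_iff₀ Real.pi_pos]
  nlinarith [Real.pi_gt_d4, Real.pi_lt_d4, mul_pos Real.pi_pos Real.pi_pos]

theorem hasDerivAt_cotTaylor (x : ℝ) :
    HasDerivAt cotTaylor (-((π - 2) / 2 * (1 + 4 * cotTaylorRatio * (x - 1 / 4)))) x := by
  have hshift : HasDerivAt (fun z : ℝ ↦ z - 1 / 4) 1 x := (hasDerivAt_id x).sub_const _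
  refine (((hshift.const_mul ((π - 2) / 2)).mul
    ((hshift.const_mul (2 * cotTaylorRatio)).const_add 1)).const_sub (1 / 2)).congr_deriv ?_
  ring

/-- The quotient by `(x - 1 / 4) ^ 2` of the defect of `cotTaylor` in the Riccati equation
`2 x y' = y - π / 2 * (y ^ 2 + x)`. -/
noncomputable def cotTaylorDefect (x : ℝ) : ℝ :=
  (π - 2) * (π * (π - 2) / 8 * (1 + 2 * cotTaylorRatio * (x - 1 / 4)) ^ 2
    - (π / 2 + 3) * cotTaylorRatio)

theorem riccati_cotTaylor (x : ℝ) :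
    π / 2 * (cotTaylor x ^ 2 + x) - cotTaylor x
      + 2 * x * -((π - 2) / 2 * (1 + 4 * cotTaylorRatio * (x - 1 / 4))) =
    (x - 1 / 4) ^ 2 * cotTaylorDefect x := by
  unfold cotTaylor cotTaylorDefect
  linear_combination -(x - 1 / 4) / 4 * four_mul_pi_sub_two_mul_cotTaylorRatio

theorem cotTaylorDefect_monotoneOn : MonotoneOn cotTaylorDefect (Set.Ici 0) := by
  intro x hx z _ hxz
  have hβ := cotTaylorRatio_pos
  have hβ' := cotTaylorRatio_le
  have hpi : 0 < π - 2 := by linarith [Real.pi_gt_three]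
  have hbase : 0 ≤ 1 + 2 * cotTaylorRatio * (x - 1 / 4) := by nlinarith [Set.mem_Ici.1 hx]
  unfold cotTaylorDefect
  gcongr

theorem cotTaylorDefect_nonneg (hx : 1 / 4 ≤ x) : 0 ≤ cotTaylorDefect x := by
  have hquarter : 0 ≤ cotTaylorDefect (1 / 4) := by
    have := four_mul_pi_sub_two_mul_cotTaylorRatio
    unfold cotTaylorDefect
    nlinarith [Real.pi_gt_d2, Real.pi_lt_d2]
  exact hquarter.trans (cotTaylorDefect_monotoneOn (by norm_num) (by simp; linarith) hx)

theorem hasDerivAt_phaseGap_cotTaylor (hu : 0 ≤ u) :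
    HasDerivAt (phaseGap cotTaylor)
      ((u ^ 2 - 1 / 4) ^ 2 / (cotTaylor (u ^ 2) ^ 2 + u ^ 2) * cotTaylorDefect (u ^ 2)) u := by
  have hslit : 0 < cotTaylor (u ^ 2) ∨ u ≠ 0 := by
    rcases hu.eq_or_lt with rfl | hu
    · exact .inl (by simpa using cotTaylor_zero_pos)
    · exact .inr hu.ne'
  refine (hasDerivAt_phaseGap (hasDerivAt_cotTaylor _) hslit).congr_deriv ?_
  rw [riccati_cotTaylor]
  ring

theorem phaseGap_cotTaylor_half : phaseGap cotTaylor (1 / 2) = 0 := by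
  have hval : cotTaylor ((1 / 2) ^ 2) = 1 / 2 := by norm_num [cotTaylor]
  have harg : Complex.arg ⟨1 / 2, 1 / 2⟩ = π / 4 := by
    have hlt := abs_lt.1 (Complex.abs_arg_lt_pi_div_two_iff.2 (.inl (by norm_num :
      0 < (⟨1 / 2, 1 / 2⟩ : ℂ).re)))
    rw [← Real.arctan_tan hlt.1 hlt.2, Complex.tan_arg, ← Real.arctan_one]
    norm_num
  rw [phaseGap, hval, harg]
  ring

theorem phaseGap_cotTaylor_zero : phaseGap cotTaylor 0 = 0 := by
  have hreal : (⟨cotTaylor (0 ^ 2), 0⟩ : ℂ) = (cotTaylor 0 : ℝ) := by simp [Complex.ext_iff]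
  rw [phaseGap, hreal, Complex.arg_ofReal_of_nonneg cotTaylor_zero_pos.le]
  ring

theorem mul_cot_le_cotTaylor (h1 : 1 / 2 ≤ u) (h2 : u ≤ 1) :
    u * Real.cot (π * u / 2) ≤ cotTaylor (u ^ 2) := by
  have hmono : MonotoneOn (phaseGap cotTaylor) (Set.Ici (1 / 2)) := by
    have hpos {v : ℝ} (hv : v ∈ Set.Ici (1 / 2)) : 0 ≤ v := by linarith [Set.mem_Ici.1 hv]
    refine monotoneOn_of_hasDerivWithinAt_nonneg (convex_Ici _)
      (fun v hv ↦ (hasDerivAt_phaseGap_cotTaylor (hpos hv)).continuousAt.continuousWithinAt)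
      (fun v hv ↦ (hasDerivAt_phaseGap_cotTaylor (hpos (interior_subset hv))).hasDerivWithinAt)
      (fun v hv ↦ mul_nonneg (by positivity) (cotTaylorDefect_nonneg ?_))
    nlinarith [Set.mem_Ici.1 (interior_subset hv)]
  refine mul_cot_le_of_phaseGap_nonneg (by linarith) (by linarith) ?_
  rw [← phaseGap_cotTaylor_half]
  exact hmono Set.self_mem_Ici h1 h1

theorem cotTaylor_le_mul_cot (h0 : 0 < u) (h1 : u ≤ 1 / 2) :
    cotTaylor (u ^ 2) ≤ u * Real.cot (π * u / 2) := by
  refine le_mul_cot_of_phaseGap_nonpos h0 (by linarith) ?_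
  refine nonpos_of_hasDerivAt_mul_monotoneOn (fun v hv ↦ hasDerivAt_phaseGap_cotTaylor hv.1)
    (fun v _ ↦ by positivity) (fun v hv z _ hvz ↦ ?_) phaseGap_cotTaylor_zero.le
    phaseGap_cotTaylor_half.le u ⟨h0.le, h1⟩
  exact cotTaylorDefect_monotoneOn (sq_nonneg v) (sq_nonneg z) (pow_le_pow_left₀ hv.1 hvz 2)

end CotBounds

section WBounds

variable {ν : ℝ}

theorem w_eq (hν : ν ≠ 1) : w ν = Ups ν * Real.cot (π * Ups ν / 2) := if_neg hν

theorem Ups_sq (hν : ν ^ 2 ≤ 1) : Ups ν ^ 2 = 1 - ν ^ 2 := Real.sq_sqrt (by linarith)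

theorem Ups_le_one : Ups ν ≤ 1 := Real.sqrt_le_one.2 (by nlinarith)

theorem half_le_Ups (hν : ν ^ 2 ≤ 3 / 4) : 1 / 2 ≤ Ups ν :=
  Real.le_sqrt_of_sq_le (by linarith)

theorem w_le_pi_div_four_mul_sq (hν : ν ^ 2 ≤ 3 / 4) : w ν ≤ π / 4 * ν ^ 2 := by
  have h := mul_cot_le_pi_div_four_mul_one_sub_sq (half_le_Ups hν) Ups_le_one
  rwa [← w_eq (by rintro rfl; norm_num at hν), Ups_sq (by linarith), sub_sub_cancel] at h

theorem w_le_cotTaylor (hν : ν ^ 2 ≤ 3 / 4) : w ν ≤ cotTaylor (1 - ν ^ 2) := by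
  have h := mul_cot_le_cotTaylor (half_le_Ups hν) Ups_le_one
  rwa [← w_eq (by rintro rfl; norm_num at hν), Ups_sq (by linarith)] at h

theorem cotTaylor_le_w (h0 : 0 ≤ ν) (h1 : ν ≤ 1) (hν : 3 / 4 ≤ ν ^ 2) :
    cotTaylor (1 - ν ^ 2) ≤ w ν := by
  rcases h1.eq_or_lt with rfl | h1
  · simpa [w] using cotTaylor_zero_le
  · have hpos : 0 < Ups ν := Real.sqrt_pos.2 (by nlinarith)
    have hle : Ups ν ≤ 1 / 2 := Real.sqrt_le_iff.2 ⟨by norm_num, by linarith⟩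
    rw [w_eq h1.ne, ← Ups_sq (by nlinarith)]
    exact cotTaylor_le_mul_cot hpos hle

theorem one_sub_two_mul_cotTaylor_one_sub_sq (ν : ℝ) :
    1 - 2 * cotTaylor (1 - ν ^ 2) =
      (3 / 4 - ν ^ 2) * ((π - 2) * (1 + 2 * cotTaylorRatio * (3 / 4 - ν ^ 2))) := by
  rw [one_sub_two_mul_cotTaylor]
  ring

theorem pi_sub_two_mul_one_add_pos (hν : ν ^ 2 ≤ 1) :
    0 < (π - 2) * (1 + 2 * cotTaylorRatio * (3 / 4 - ν ^ 2)) :=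
  mul_pos (by linarith [Real.pi_gt_three])
    (by nlinarith [cotTaylorRatio_pos, cotTaylorRatio_le])

theorem div_one_sub_two_mul_w_mem_Icc (h0 : 0 ≤ ν) (h1 : ν ≤ 1) :
    (3 / 4 - ν ^ 2) / (1 - 2 * w ν) ∈
      Set.Icc 0 (1 / ((π - 2) * (1 + 2 * cotTaylorRatio * (3 / 4 - ν ^ 2)))) := by
  have htaylor := one_sub_two_mul_cotTaylor_one_sub_sq ν
  have hm := pi_sub_two_mul_one_add_pos (show ν ^ 2 ≤ 1 by nlinarith)
  set m := (π - 2) * (1 + 2 * cotTaylorRatio * (3 / 4 - ν ^ 2))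
  rcases lt_trichotomy (ν ^ 2) (3 / 4) with h | h | h
  · have hd : 0 < 3 / 4 - ν ^ 2 := by linarith
    have hle : (3 / 4 - ν ^ 2) * m ≤ 1 - 2 * w ν := by linarith [w_le_cotTaylor h.le]
    have hq : 0 < 1 - 2 * w ν := (mul_pos hd hm).trans_le hle
    exact ⟨by positivity, by rw [div_le_div_iff₀ hq hm]; linarith⟩
  · simpa [h] using hm.le
  · have hd : 0 < ν ^ 2 - 3 / 4 := by linarith
    have hle : (ν ^ 2 - 3 / 4) * m ≤ 2 * w ν - 1 := by linarith [cotTaylor_le_w h0 h1 h.le]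
    have hq : 0 < 2 * w ν - 1 := (mul_pos hd hm).trans_le hle
    rw [← neg_sub, ← neg_sub (2 * w ν), neg_div_neg_eq]
    exact ⟨by positivity, by rw [div_le_div_iff₀ hq hm]; linarith⟩

end WBounds

section Eta

variable {ν : ℝ}

theorem eta_eq_div (hν : ν ≠ √3 / 2) :
    eta ν = (√(9 + 4 * ν ^ 2) - 4 * ν) / (3 * (1 - 2 * w ν)) := if_neg hν

theorem eta_eq_mul_div (h0 : 0 ≤ ν) (hν : ν ≠ √3 / 2) :
    eta ν = 4 / (√(9 + 4 * ν ^ 2) + 4 * ν) * ((3 / 4 - ν ^ 2) / (1 - 2 * w ν)) := by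
  have hsq : √(9 + 4 * ν ^ 2) ^ 2 = 9 + 4 * ν ^ 2 := Real.sq_sqrt (by positivity)
  have hdiff : √(9 + 4 * ν ^ 2) - 4 * ν =
      12 * (3 / 4 - ν ^ 2) / (√(9 + 4 * ν ^ 2) + 4 * ν) := by
    rw [eq_div_iff (by positivity)]
    linear_combination hsq
  rw [eta_eq_div hν, hdiff]
  simp only [div_eq_mul_inv, mul_inv]
  ring

theorem eta_nonneg (h0 : 0 ≤ ν) (h1 : ν ≤ 1) (hν : ν ≠ √3 / 2) : 0 ≤ eta ν := by
  rw [eta_eq_mul_div h0 hν]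
  exact mul_nonneg (by positivity) (div_one_sub_two_mul_w_mem_Icc h0 h1).1

theorem eta_le_of_one_le_mul {ρ : ℝ} (h0 : 0 ≤ ν) (h1 : ν ≤ 1) (hν : ν ≠ √3 / 2)
    (hρ : 1 ≤ ρ * (1 + 2 * cotTaylorRatio * (3 / 4 - ν ^ 2))) :
    eta ν ≤ 4 * ρ / ((π - 2) * (√(9 + 4 * ν ^ 2) + 4 * ν)) := by
  have hpi : 0 < π - 2 := by linarith [Real.pi_gt_three]
  have hm := pi_sub_two_mul_one_add_pos (show ν ^ 2 ≤ 1 by nlinarith)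
  calc eta ν ≤ 4 / (√(9 + 4 * ν ^ 2) + 4 * ν) *
        (1 / ((π - 2) * (1 + 2 * cotTaylorRatio * (3 / 4 - ν ^ 2)))) := by
        rw [eta_eq_mul_div h0 hν]
        exact mul_le_mul_of_nonneg_left (div_one_sub_two_mul_w_mem_Icc h0 h1).2 (by positivity)
    _ ≤ 4 / (√(9 + 4 * ν ^ 2) + 4 * ν) * (ρ / (π - 2)) := by
        refine mul_le_mul_of_nonneg_left ?_ (by positivity)
        rw [div_le_div_iff₀ hm hpi]
        nlinarith
    _ = 4 * ρ / ((π - 2) * (√(9 + 4 * ν ^ 2) + 4 * ν)) := by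
        rw [div_mul_div_comm, mul_comm (π - 2)]

theorem four_mul_le_sqrt (hν : ν ^ 2 ≤ 3 / 4) : 4 * ν ≤ √(9 + 4 * ν ^ 2) :=
  Real.le_sqrt_of_sq_le (by linarith)

theorem eta_le_of_pi_mul_sq_lt (hν : ν ≠ √3 / 2) (hsq : ν ^ 2 ≤ 3 / 4)
    (hpi : π * ν ^ 2 < 2) :
    eta ν ≤ (√(9 + 4 * ν ^ 2) - 4 * ν) * (1 - π * ν ^ 2 / 2)⁻¹ / 3 := by
  have hS := four_mul_le_sqrt hsq
  have hq : 0 < 1 - π * ν ^ 2 / 2 := by linarith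
  have hw := w_le_pi_div_four_mul_sq hsq
  calc eta ν ≤ (√(9 + 4 * ν ^ 2) - 4 * ν) / (3 * (1 - π * ν ^ 2 / 2)) := by
        rw [eta_eq_div hν]
        exact div_le_div_of_nonneg_left (by linarith) (by positivity) (by linarith)
    _ = (√(9 + 4 * ν ^ 2) - 4 * ν) * (1 - π * ν ^ 2 / 2)⁻¹ / 3 := by
        rw [mul_comm 3, ← div_div, div_eq_mul_inv _ (1 - π * ν ^ 2 / 2)]

end Eta

section Quadratic

variable {ν : ℝ}

/-- The value at `t = 0` of `c2Quad ν t`. -/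
noncomputable def c2Const (ν : ℝ) : ℝ :=
  8 * (5 + 2 * ν ^ 2) - 196 * ν / √(9 + 4 * ν ^ 2) - 4 / 9 * (√(9 + 4 * ν ^ 2) - 4 * ν) ^ 2

/-- The concave quadratic in `t` which at `t = eta ν` gives `c2 ν`, up to the factor
`16 * ν * √(9 + 4 * ν ^ 2)`. -/
noncomputable def c2Quad (ν t : ℝ) : ℝ :=
  c2Const ν - 3 * π * (4 - π) * (√(9 + 4 * ν ^ 2) - 4 * ν) * t - 9 * (π - 2) ^ 2 * t ^ 2

theorem c2_eq_mul_c2Quad (hν : ν ≠ √3 / 2) :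
    c2 ν = 16 * ν * √(9 + 4 * ν ^ 2) * c2Quad ν (eta ν) := by
  have hpi : π - 2 ≠ 0 := by linarith [Real.pi_gt_three]
  rw [eta_eq_div hν, c2, c2Quad, c2Const]
  generalize √(9 + 4 * ν ^ 2) = S
  have hsq : 9 * π ^ 2 * (π - 4) ^ 2 / (4 * (π - 2) ^ 2) =
      (3 * π * (4 - π) / (2 * (π - 2))) ^ 2 := by
    field_simp
    ring
  have hmid : 3 * π * (4 - π) / (2 * (π - 2)) * (π - 2) = 3 * π * (4 - π) / 2 := by
    field_simp
  rw [hsq]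
  generalize 3 * π * (4 - π) / (2 * (π - 2)) = K at hmid ⊢
  simp only [div_eq_mul_inv, mul_inv]
  linear_combination (-(32 / 3) * ν * S * (S - 4 * ν) ^ 2 * (1 - 2 * w ν)⁻¹) * hmid

theorem sub_mul_sub_mul_sq_nonneg_of_le {A B C t s : ℝ} (hA : 0 ≤ A) (hC : 0 ≤ C) (ht : 0 ≤ t)
    (hts : t ≤ s) (hs : 0 ≤ A - B * s - C * s ^ 2) : 0 ≤ A - B * t - C * t ^ 2 := by
  rcases (ht.trans hts).eq_or_lt with rfl | hpos
  · obtain rfl := le_antisymm hts ht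
    exact hs
  · have : 0 ≤ s - t := sub_nonneg.2 hts
    refine nonneg_of_mul_nonneg_right (a := s) ?_ hpos
    calc 0 ≤ (s - t) * A + t * (A - B * s - C * s ^ 2) + C * s * t * (s - t) := by positivity
      _ = s * (A - B * t - C * t ^ 2) := by ring

-- `r = (√(9 + 4 ν ^ 2) + 2 ν) / 3`, whose inverse is `(√(9 + 4 ν ^ 2) - 2 ν) / 3`.
theorem exists_pos_eq_div_and_sqrt_eq_div (ν : ℝ) : ∃ r > 0,
    ν = 3 * (r ^ 2 - 1) / (4 * r) ∧ √(9 + 4 * ν ^ 2) = 3 * (r ^ 2 + 1) / (2 * r) := by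
  have hsq : √(9 + 4 * ν ^ 2) ^ 2 = 9 + 4 * ν ^ 2 := Real.sq_sqrt (by positivity)
  have hpos : 0 < √(9 + 4 * ν ^ 2) + 2 * ν := by
    have : -(2 * ν) < √(9 + 4 * ν ^ 2) := Real.lt_sqrt_of_sq_lt (by linarith)
    linarith
  refine ⟨(√(9 + 4 * ν ^ 2) + 2 * ν) / 3, by positivity, ?_, ?_⟩
  · rw [eq_div_iff (by positivity)]
    linear_combination -hsq / 3
  · rw [eq_div_iff (by positivity)]
    linear_combination hsq / 3

variable {r : ℝ}

theorem c2Const_eq_of_eq (hr : 0 < r) (hν : ν = 3 * (r ^ 2 - 1) / (4 * r))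
    (hS : √(9 + 4 * ν ^ 2) = 3 * (r ^ 2 + 1) / (2 * r)) :
    c2Const ν = 2 * (4 * (r ^ 2) ^ 2 - 31 * r ^ 2 + 63) / (r ^ 2 + 1) := by
  have : r ^ 2 + 1 ≠ 0 := by positivity
  rw [c2Const, hS, hν]
  field_simp
  ring

theorem c2Const_nonneg (ν : ℝ) : 0 ≤ c2Const ν := by
  obtain ⟨r, hr, hν, hS⟩ := exists_pos_eq_div_and_sqrt_eq_div ν
  rw [c2Const_eq_of_eq hr hν hS]
  exact div_nonneg (by nlinarith [sq_nonneg (8 * r ^ 2 - 31)]) (by positivity)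

theorem c2Quad_nonneg_of_le {t s : ℝ} (ht : 0 ≤ t) (hts : t ≤ s) (hs : 0 ≤ c2Quad ν s) :
    0 ≤ c2Quad ν t :=
  sub_mul_sub_mul_sq_nonneg_of_le (c2Const_nonneg ν) (by positivity) ht hts hs

theorem c2Quad_four_mul_div_eq (hr : 0 < r) (hr' : 1 / 3 < r ^ 2)
    (hν : ν = 3 * (r ^ 2 - 1) / (4 * r)) (hS : √(9 + 4 * ν ^ 2) = 3 * (r ^ 2 + 1) / (2 * r))
    (ρ : ℝ) :
    c2Quad ν (4 * ρ / ((π - 2) * (√(9 + 4 * ν ^ 2) + 4 * ν))) =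
      2 * (4 * (r ^ 2) ^ 2 - 31 * r ^ 2 + 63) / (r ^ 2 + 1)
        - 24 * (1 + 2 * cotTaylorRatio) * ρ * (3 - r ^ 2) / (3 * r ^ 2 - 1)
        - 64 * r ^ 2 * ρ ^ 2 / (3 * r ^ 2 - 1) ^ 2 := by
  have hpi : π - 2 ≠ 0 := by linarith [Real.pi_gt_three]
  have : 3 * r ^ 2 - 1 ≠ 0 := by linarith
  have hcoeff : π * (4 - π) = 2 * (π - 2) * (1 + 2 * cotTaylorRatio) := by
    linear_combination -four_mul_pi_sub_two_mul_cotTaylorRatio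
  have hsub : √(9 + 4 * ν ^ 2) - 4 * ν = 3 * (3 - r ^ 2) / (2 * r) := by
    rw [hS, hν]
    field_simp
    ring
  have hadd : √(9 + 4 * ν ^ 2) + 4 * ν = 3 * (3 * r ^ 2 - 1) / (2 * r) := by
    rw [hS, hν]
    field_simp
    ring
  rw [c2Quad, c2Const_eq_of_eq hr hν hS, mul_assoc 3 π, hcoeff, hsub, hadd]
  field_simp
  ring

end Quadratic

section LargeParameter

variable {β s : ℝ}

-- The fraction is `3 / 4 - ν ^ 2` in terms of `s = 3 - r ^ 2`, and `1 / 48` exceeds the coefficient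
-- `β ^ 2 + β / 24` of `s ^ 2` in the Taylor expansion of the reciprocal of the second factor.
theorem one_le_taylor_mul (hβ0 : 0 ≤ β) (hβ1 : β ≤ 1 / 10) (hs0 : -1 / 2 ≤ s) (hs1 : s ≤ 7 / 5) :
    1 ≤ (1 - β * s + s ^ 2 / 48) * (1 + 2 * β * (3 * s * (8 - 3 * s) / (16 * (3 - s)))) := by
  have hden : 0 < 3 - s := by linarith
  have hquot : 0 ≤ (3 - s) / 6 - β - 3 * β ^ 2 * (8 - 3 * s) + β * s * (8 - 3 * s) / 16 := by
    have hlin : β * (1 + (8 - 3 * s) * (3 / 10 - s / 16)) ≤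
        1 / 10 * (1 + (8 - 3 * s) * (3 / 10 - s / 16)) :=
      mul_le_mul_of_nonneg_right hβ1 (by nlinarith)
    have hsq : β ^ 2 * (8 - 3 * s) ≤ 1 / 10 * β * (8 - 3 * s) :=
      mul_le_mul_of_nonneg_right (by nlinarith) (by linarith)
    nlinarith
  have hexcess : (1 - β * s + s ^ 2 / 48) *
      (1 + 2 * β * (3 * s * (8 - 3 * s) / (16 * (3 - s)))) - 1 = s ^ 2 / (8 * (3 - s)) *
        ((3 - s) / 6 - β - 3 * β ^ 2 * (8 - 3 * s) + β * s * (8 - 3 * s) / 16) := by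
    field_simp
    ring
  rw [← sub_nonneg, hexcess]
  positivity

theorem taylor_quartic_nonneg (hβ : 0 ≤ β) (hs0 : -1 / 2 ≤ s) (hs1 : s ≤ 7 / 5) :
    0 ≤ 11952 + 29952 * β + 27648 * β ^ 2 - (11784 + 17856 * β + 18432 * β ^ 2) * s
      + (2844 + 2640 * β + 2880 * β ^ 2) * s ^ 2 - (47 + 12 * β) * s ^ 3 - s ^ 4 := by
  have hcube : s ^ 3 ≤ 7 / 5 * s ^ 2 := by nlinarith [sq_nonneg s]
  have hfourth : s ^ 4 ≤ 49 / 25 * s ^ 2 := by nlinarith [sq_nonneg s]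
  have hconst : 0 ≤ 11952 - 11784 * s + 2844 * s ^ 2 - 47 * s ^ 3 - s ^ 4 := by
    nlinarith [sq_nonneg (7 / 5 - s)]
  have hlin : 0 ≤ 29952 - 17856 * s + 2640 * s ^ 2 - 12 * s ^ 3 := by
    nlinarith [sq_nonneg (7 / 5 - s)]
  have hquad : 0 ≤ 27648 - 18432 * s + 2880 * s ^ 2 := by nlinarith
  calc 0 ≤ (11952 - 11784 * s + 2844 * s ^ 2 - 47 * s ^ 3 - s ^ 4)
        + β * (29952 - 17856 * s + 2640 * s ^ 2 - 12 * s ^ 3)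
        + β ^ 2 * (27648 - 18432 * s + 2880 * s ^ 2) := by positivity
    _ = _ := by ring

theorem taylor_bound_nonneg (hβ : 0 ≤ β) (hs0 : -1 / 2 ≤ s) (hs1 : s ≤ 7 / 5) :
    0 ≤ 2 * (4 * (3 - s) ^ 2 - 31 * (3 - s) + 63) / (3 - s + 1)
        - 24 * (1 + 2 * β) * (1 - β * s + s ^ 2 / 48) * s / (3 * (3 - s) - 1)
        - 64 * (3 - s) * (1 - β * s + s ^ 2 / 48) ^ 2 / (3 * (3 - s) - 1) ^ 2 := by
  have hden1 : 0 < 3 - s + 1 := by linarith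
  have hden2 : 0 < 3 * (3 - s) - 1 := by linarith
  have hfactor : 2 * (4 * (3 - s) ^ 2 - 31 * (3 - s) + 63) / (3 - s + 1)
        - 24 * (1 + 2 * β) * (1 - β * s + s ^ 2 / 48) * s / (3 * (3 - s) - 1)
        - 64 * (3 - s) * (1 - β * s + s ^ 2 / 48) ^ 2 / (3 * (3 - s) - 1) ^ 2 =
      s ^ 2 * (11952 + 29952 * β + 27648 * β ^ 2 - (11784 + 17856 * β + 18432 * β ^ 2) * s
        + (2844 + 2640 * β + 2880 * β ^ 2) * s ^ 2 - (47 + 12 * β) * s ^ 3 - s ^ 4) /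
        (36 * (3 - s + 1) * (3 * (3 - s) - 1) ^ 2) := by
    field_simp
    ring
  have := taylor_quartic_nonneg hβ hs0 hs1
  rw [hfactor]
  positivity

theorem sq_mem_Icc_of_eq {ν r : ℝ} (hr : 0 < r) (hν : ν = 3 * (r ^ 2 - 1) / (4 * r))
    (h0 : 3 / 8 ≤ ν) (h1 : ν ≤ 1) : r ^ 2 ∈ Set.Icc (8 / 5) (7 / 2) := by
  rw [hν, le_div_iff₀ (by positivity)] at h0
  rw [hν, div_le_iff₀ (by positivity)] at h1
  have hlow : 32 / 25 ≤ r := by nlinarith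
  have hhigh : r ≤ 187 / 100 := by nlinarith
  constructor <;> nlinarith

theorem c2Quad_eta_nonneg_of_ge {ν : ℝ} (h0 : 3 / 8 ≤ ν) (h1 : ν ≤ 1) (hν : ν ≠ √3 / 2) :
    0 ≤ c2Quad ν (eta ν) := by
  obtain ⟨r, hr, hνr, hS⟩ := exists_pos_eq_div_and_sqrt_eq_div ν
  obtain ⟨hr1, hr2⟩ := sq_mem_Icc_of_eq hr hνr h0 h1
  have hβ := cotTaylorRatio_pos.le
  have hd : 3 / 4 - ν ^ 2 =
      3 * (3 - r ^ 2) * (8 - 3 * (3 - r ^ 2)) / (16 * (3 - (3 - r ^ 2))) := by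
    rw [sub_sub_cancel, hνr]
    field_simp
    ring
  have hρ := one_le_taylor_mul (s := 3 - r ^ 2) hβ cotTaylorRatio_le (by linarith) (by linarith)
  rw [← hd] at hρ
  refine c2Quad_nonneg_of_le (eta_nonneg (by linarith) h1 hν)
    (eta_le_of_one_le_mul (by linarith) h1 hν hρ) ?_
  have hbound := taylor_bound_nonneg (s := 3 - r ^ 2) hβ (by linarith) (by linarith)
  rw [sub_sub_cancel] at hbound
  rw [c2Quad_four_mul_div_eq hr (by linarith) hνr hS]
  exact hbound

end LargeParameter

section SmallParameter

variable {ν : ℝ}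

theorem c2Quad_mul_div_three_eq (ν i : ℝ) :
    c2Quad ν ((√(9 + 4 * ν ^ 2) - 4 * ν) * i / 3) =
      ν * (320 / 9 * √(9 + 4 * ν ^ 2) - 196 / √(9 + 4 * ν ^ 2) - 656 / 9 * ν)
        - (√(9 + 4 * ν ^ 2) - 4 * ν) ^ 2 * ((i - 1) * (4 + (π - 2) ^ 2 * i)) := by
  have hsq : √(9 + 4 * ν ^ 2) ^ 2 = 9 + 4 * ν ^ 2 := Real.sq_sqrt (by positivity)
  rw [c2Quad, c2Const]
  linear_combination (-40 / 9) * hsq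

theorem inv_sub_one_mul_le (h0 : 0 ≤ ν) (h1 : ν ≤ 3 / 8) :
    ((1 - π * ν ^ 2 / 2)⁻¹ - 1) * (4 + (π - 2) ^ 2 * (1 - π * ν ^ 2 / 2)⁻¹) ≤
      59 / 5 * ν ^ 2 := by
  have hq : 77 / 100 ≤ 1 - π * ν ^ 2 / 2 := by nlinarith [Real.pi_lt_d2]
  set i := (1 - π * ν ^ 2 / 2)⁻¹ with hi
  have : 0 ≤ i := by positivity
  have hi1 : i ≤ 100 / 77 := by
    rw [hi, inv_le_comm₀ (by linarith) (by norm_num)]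
    linarith
  have hexcess : i - 1 = π / 2 * i * ν ^ 2 := by
    linear_combination inv_mul_cancel₀ (show 1 - π * ν ^ 2 / 2 ≠ 0 by linarith)
  have hpi : (π - 2) ^ 2 ≤ 131 / 100 := by nlinarith [Real.pi_gt_three, Real.pi_lt_d4]
  calc (i - 1) * (4 + (π - 2) ^ 2 * i) = π / 2 * i * (4 + (π - 2) ^ 2 * i) * ν ^ 2 := by
        rw [hexcess]
        ring
    _ ≤ 3.1416 / 2 * (100 / 77) * (4 + 131 / 100 * (100 / 77)) * ν ^ 2 := by
        gcongr
        exact Real.pi_lt_d4.le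
    _ ≤ 59 / 5 * ν ^ 2 := mul_le_mul_of_nonneg_right (by norm_num) (sq_nonneg ν)

-- `31 / 120` is the point where the maximum is attained.
theorem mul_sub_four_mul_sq_le (h1 : ν ≤ 3 / 8) : ν * (31 / 10 - 4 * ν) ^ 2 ≤ 111 / 100 := by
  have : 0 ≤ (ν - 31 / 120) ^ 2 * (31 / 30 - ν) := mul_nonneg (sq_nonneg _) (by linarith)
  nlinarith

theorem c2Quad_eta_nonneg_of_le (h0 : 0 ≤ ν) (h1 : ν ≤ 3 / 8) : 0 ≤ c2Quad ν (eta ν) := by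
  have hsq : ν ^ 2 ≤ 9 / 64 := by nlinarith
  have hpi : π * ν ^ 2 < 2 := by nlinarith [Real.pi_lt_d2]
  have hge : 3 ≤ √(9 + 4 * ν ^ 2) := Real.le_sqrt_of_sq_le (by nlinarith)
  have hle : √(9 + 4 * ν ^ 2) ≤ 31 / 10 := Real.sqrt_le_iff.2 ⟨by norm_num, by linarith⟩
  have hν : ν ≠ √3 / 2 := by
    rintro rfl
    norm_num [div_pow] at hsq
  refine c2Quad_nonneg_of_le (eta_nonneg h0 (by linarith) hν)
    (eta_le_of_pi_mul_sq_lt hν (by linarith) hpi) ?_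
  rw [c2Quad_mul_div_three_eq, sub_nonneg]
  calc (√(9 + 4 * ν ^ 2) - 4 * ν) ^ 2 *
        (((1 - π * ν ^ 2 / 2)⁻¹ - 1) * (4 + (π - 2) ^ 2 * (1 - π * ν ^ 2 / 2)⁻¹))
      ≤ (√(9 + 4 * ν ^ 2) - 4 * ν) ^ 2 * (59 / 5 * ν ^ 2) :=
        mul_le_mul_of_nonneg_left (inv_sub_one_mul_le h0 h1) (sq_nonneg _)
    _ ≤ (31 / 10 - 4 * ν) ^ 2 * (59 / 5 * ν ^ 2) :=
        mul_le_mul_of_nonneg_right (pow_le_pow_left₀ (by linarith) (by linarith) 2)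
          (by positivity)
    _ = ν * (59 / 5 * (ν * (31 / 10 - 4 * ν) ^ 2)) := by ring
    _ ≤ ν * (320 / 9 * √(9 + 4 * ν ^ 2) - 196 / √(9 + 4 * ν ^ 2) - 656 / 9 * ν) := by
        have hdiv : 196 / √(9 + 4 * ν ^ 2) ≤ 196 / 3 := by gcongr
        exact mul_le_mul_of_nonneg_left (by linarith [mul_sub_four_mul_sq_le h1]) h0

end SmallParameter

/-- For every ν ∈ [0,1] ∖ {√3/2} one has c₂(ν) ≥ 0. -/
theorem c2_nonneg (ν : ℝ) (hν : ν ∈ Set.Icc (0 : ℝ) 1) (h : ν ≠ Real.sqrt 3 / 2) :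
    0 ≤ c2 ν := by
  obtain ⟨h0, h1⟩ := hν
  rw [c2_eq_mul_c2Quad h]
  refine mul_nonneg (by positivity) ?_
  rcases le_total ν (3 / 8) with hle | hge
  · exact c2Quad_eta_nonneg_of_le h0 hle
  · exact c2Quad_eta_nonneg_of_ge hge h1 h
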